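/- For every convex body K ⊆ ℝ^d, the covering parameter satisfies C(K) ≤ coin(K). -/

import Mathlib

open Set Pointwise

section Defs

variable {V : Type*} [NormedAddCommGroup V] [NormedSpace ℝ V]

/-- A convex body: compact, convex, with nonempty interior. -/
def IsConvexBody (K : Set V) : Prop :=
  IsCompact K ∧ Convex ℝ K ∧ (interior K).Nonempty

/-- `K` can be covered by `m` homothets of ratio `lam`. -/
def CoversWith (K : Set V) (lam : ℝ) (m : ℕ) : Prop :=
  ∃ t : Fin m → V, K ⊆ ⋃ i, (fun x => lam • x + t i) '' K

/-- The `m`-covering number `γ_m(K)`. -/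
noncomputable def gammaC (m : ℕ) (K : Set V) : ℝ :=
  sInf {lam : ℝ | 0 < lam ∧ CoversWith K lam m}

/-- The covering index `coin(K)`. -/
noncomputable def coin (K : Set V) : ℝ :=
  sInf {r : ℝ | ∃ m : ℕ, 0 < m ∧ gammaC m K ≤ 1 / 2 ∧ r = (m : ℝ) / (1 - gammaC m K)}

/-- The weak covering index `wcoin(K)`. -/
noncomputable def wcoin (K : Set V) : ℝ :=
  sInf {r : ℝ | ∃ m : ℕ, 0 < m ∧ gammaC m K < 1 ∧ r = (m : ℝ) / (1 - gammaC m K)}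

/-- `N_λ(K)`: the least number of translates of `λ • K` needed to cover `K`. -/
noncomputable def covN (lam : ℝ) (K : Set V) : ℕ :=
  sInf {n : ℕ | CoversWith K lam n}

/-- A convex body is tightly covered if for every `0 < λ < 1` it contains `N_λ(K)`
points no two of which lie in a common homothet `λ • K + t`. -/
def TightlyCovered (K : Set V) : Prop :=
  ∀ lam : ℝ, 0 < lam → lam < 1 →
    ∃ p : Fin (covN lam K) → V, (∀ i, p i ∈ K) ∧
      ∀ i j, i ≠ j → ∀ t : V,
        ¬(p i ∈ (fun x => lam • x + t) '' K ∧ p j ∈ (fun x => lam • x + t) '' K)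

/-- The covering parameter `C(K)` of Swanepoel. -/
noncomputable def covParam (K : Set V) : ℝ :=
  sInf {r : ℝ | ∃ k : ℕ, ∃ lam : Fin k → ℝ, ∃ t : Fin k → V,
    (∀ i, 0 < lam i ∧ lam i < 1) ∧
    (K ⊆ ⋃ i, (fun x => lam i • x + t i) '' K) ∧
    r = ∑ i, 1 / (1 - lam i)}

/-- The (multiplicative) Banach–Mazur distance. -/
noncomputable def distBM {d : ℕ} (K L : Set (Fin d → ℝ)) : ℝ :=
  sInf {δ : ℝ | 1 ≤ δ ∧ ∃ T : (Fin d → ℝ) ≃ₗ[ℝ] (Fin d → ℝ), ∃ a ∈ K, ∃ b ∈ L,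
    (fun x => x - b) '' L ⊆ T '' ((fun x => x - a) '' K) ∧
    T '' ((fun x => x - a) '' K) ⊆ δ • ((fun x => x - b) '' L)}

end Defs

theorem exists_half_cover {d : ℕ} {K : Set (Fin d → ℝ)} (hK : IsConvexBody K) :
    ∃ m : ℕ, 0 < m ∧ CoversWith K (1 / 2) m := by
  obtain ⟨hc, -, p, hp⟩ := hK
  obtain ⟨s, -, hs⟩ := hc.elim_nhds_subcover
    (fun x => (fun y => (1 / 2 : ℝ) • y + (x - (1 / 2 : ℝ) • p)) '' K) (by
      intro x _
      let h : (Fin d → ℝ) ≃ₜ (Fin d → ℝ) :=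
        (Homeomorph.smulOfNeZero (1 / 2 : ℝ) (by norm_num)).trans
          (Homeomorph.addRight (x - (1 / 2 : ℝ) • p))
      have h1 : h '' K ∈ nhds (h p) := by
        rw [← h.map_nhds_eq]
        exact Filter.image_mem_map (mem_interior_iff_mem_nhds.1 hp)
      have h2 : h p = x := by
        change (1 / 2 : ℝ) • p + (x - (1 / 2 : ℝ) • p) = x
        abel
      rw [h2] at h1
      exact h1)
  refine ⟨s.card, ?_, fun i => (s.equivFin.symm i : Fin d → ℝ) - (1 / 2 : ℝ) • p, ?_⟩
  · rw [Finset.card_pos, Finset.nonempty_iff_ne_empty]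
    rintro rfl
    have := hs (interior_subset hp)
    simp at this
  · intro y hy
    obtain ⟨x, hx, hy'⟩ := mem_iUnion₂.1 (hs hy)
    refine mem_iUnion.2 ⟨s.equivFin ⟨x, hx⟩, ?_⟩
    simpa using hy'

theorem covParam_le_of_covers {d : ℕ} {K : Set (Fin d → ℝ)} {m : ℕ} {l : ℝ}
    (h0 : 0 < l) (h1 : l < 1) (h : CoversWith K l m) : covParam K ≤ m / (1 - l) := by
  obtain ⟨t, ht⟩ := h
  refine csInf_le ⟨0, ?_⟩ ⟨m, fun _ => l, t, fun _ => ⟨h0, h1⟩, ht, ?_⟩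
  · rintro r ⟨k, lam, t, hl, -, rfl⟩
    refine Finset.sum_nonneg fun i _ => ?_
    have := (hl i).2
    exact one_div_nonneg.2 (by linarith)
  · simp [div_eq_mul_inv]

/-- the covering parameter is at most the covering index. -/
theorem covParam_le_coin (d : ℕ) (K : Set (Fin d → ℝ)) (hK : IsConvexBody K) :
    covParam K ≤ coin K := by
  apply le_csInf
  · obtain ⟨m, hm, h⟩ := exists_half_cover hK
    exact ⟨_, m, hm, csInf_le ⟨0, fun l hl => hl.1.le⟩ ⟨by norm_num, h⟩, rfl⟩
  · rintro r ⟨m, hm, hg, rfl⟩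
    have hm' : (0 : ℝ) < m := by exact_mod_cast hm
    rw [le_div_iff₀ (by linarith)]
    by_contra! hlt
    have hC : 0 < covParam K := by
      by_contra! hC
      nlinarith
    have hne : {lam : ℝ | 0 < lam ∧ CoversWith K lam m}.Nonempty :=
      ⟨1, one_pos, fun _ => 0, fun x hx => mem_iUnion.2 ⟨⟨0, hm⟩, x, hx, by simp⟩⟩
    have hlt' : gammaC m K < 1 - m / covParam K := by
      have : m / covParam K < 1 - gammaC m K := by
        rw [div_lt_iff₀ hC]; linarith
      linarith
    obtain ⟨l, ⟨hl0, hl⟩, hl2⟩ := exists_lt_of_csInf_lt hne hlt'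
    have hpos : 0 < m / covParam K := by positivity
    have h3 := covParam_le_of_covers hl0 (by linarith) hl
    rw [le_div_iff₀ (by linarith)] at h3
    have h4 : m / covParam K < 1 - l := by linarith
    rw [div_lt_iff₀ hC] at h4
    linarith
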